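/- Let L ≥ 1 and let S_L denote the space of finite spherical harmonic expansions of maximal degree L on the unit sphere S² ⊂ ℝ³, i.e., the space of restrictions to S² of complex polynomials on ℝ³ of degree at most L. Let t_{L,L} ∈ (0,1) be the largest zero of the Legendre polynomial P_L, and for y ∈ S² let C_{t_{L,L}}(y) = {x ∈ S² : ⟨x,y⟩ ≥ t_{L,L}} be the spherical cap of angle arccos(t_{L,L}) centered at y. Define ρ_{S²}(Ω,L) = sup_{y∈S²} |Ω ∩ C_{t_{L,L}}(y)| / |C_{t_{L,L}}(y)| and B_L = (1 − t_{L,L}) · (∫_{t_{L,L}}^1 P_L(t)² dt)^{−1}. Then for every measurable Ω ⊆ S² and every nonzero f ∈ S_L, ∫_Ω |f|² dσ ≤ B_L · ρ_{S²}(Ω,L) · ∫_{S²} |f|² dσ, i.e. λ₂(Ω, S_L) ≤ B_L · ρ_{S²}(Ω,L). -/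

import Mathlib

open MeasureTheory

/-- The degree-`n` Legendre polynomial, via the Rodrigues formula
`P_n(x) = (1 / (2ⁿ n!)) dⁿ/dxⁿ (x² - 1)ⁿ`, normalized so that `P_n(1) = 1`. -/
noncomputable def legendrePoly (n : ℕ) : Polynomial ℝ :=
  Polynomial.C (1 / ((2 : ℝ) ^ n * n.factorial)) *
    (Polynomial.derivative)^[n] ((Polynomial.X ^ 2 - 1) ^ n)

namespace LSSH
open Polynomial

lemma legendre_ode (n : ℕ) :
    derivative ((1 - X ^ 2) * derivative (legendrePoly n)) =
      - C ((n : ℝ) * (n + 1)) * legendrePoly n := by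
  set u : ℝ[X] := (X ^ 2 - 1) ^ n with hu
  have h1 : derivative u * X * X - derivative u = C (2 * (n:ℝ)) * (u * X) := by
    rcases n with _ | n
    · simp [hu]
    · simp only [hu, derivative_pow_succ, derivative_sub, derivative_one]
      simp only [map_mul, map_ofNat, map_natCast, Nat.cast_add, Nat.cast_one, map_add, map_one]
      simp
      ring
  have h2 := congrArg (fun p => derivative^[n+1] p) h1
  simp only [iterate_derivative_sub, iterate_derivative_C_mul, iterate_derivative_mul_X] at h2
  simp only [Nat.add_sub_cancel] at h2
  set v := derivative^[n] u with hv
  have e1 : derivative^[n+1] u = derivative v := by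
    rw [Function.iterate_succ_apply']
  have e2 : derivative^[n+1+1] u = derivative (derivative v) := by
    rw [Function.iterate_succ_apply', e1]
  have e3 : derivative^[n+1] (derivative u) = derivative (derivative v) := by
    rw [← e2, ← Function.iterate_succ_apply]
  have e4 : derivative^[n] (derivative u) = derivative v := by
    rw [← e1, ← Function.iterate_succ_apply]
  have e5 : n • derivative^[n - 1] (derivative u) = n • v := by
    rcases n with _ | n
    · simp
    · rw [Nat.add_sub_cancel, ← Function.iterate_succ_apply]
  rw [e1, e3, e4, e5] at h2
  have h3 : (1 - X ^ 2) * derivative (derivative v) - C 2 * X * derivative v =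
      - C ((n : ℝ) * (n + 1)) * v := by
    simp only [nsmul_eq_mul, Nat.cast_add, Nat.cast_one, map_mul, map_ofNat, map_natCast,
      map_add, map_one] at h2 ⊢
    linear_combination -h2
  unfold legendrePoly
  rw [← hu, ← hv]
  set c := C (1 / ((2 : ℝ) ^ n * n.factorial)) with hc
  have : derivative ((1 - X ^ 2) * derivative (c * v)) =
    c * ((1 - X ^ 2) * derivative (derivative v) - C 2 * X * derivative v) := by
    have h22 : (C (2:ℝ)) = (2:ℝ[X]) := map_ofNat C 2
    rw [h22]
    simp [hc]
    ring
  rw [this, h3]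
  ring

lemma legendre_one (n : ℕ) : (legendrePoly n).eval 1 = 1 := by
  have : (X ^ 2 - 1 : ℝ[X]) ^ n = (X - C 1) ^ n * (X + 1) ^ n := by
    rw [← mul_pow]; congr 1; simp; ring
  unfold legendrePoly
  rw [this, iterate_derivative_mul, eval_mul, eval_finsetSum,
    Finset.sum_eq_single_of_mem 0 (Finset.mem_range.mpr n.succ_pos)]
  · rw [n.choose_zero_right, one_smul, eval_mul, n.sub_zero, iterate_derivative_X_sub_pow_self,
      eval_natCast]
    simp
    have := n.factorial_ne_zero
    norm_num
    field_simp
  · intro b hb hb0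
    rw [iterate_derivative_X_sub_pow, eval_smul, eval_mul, eval_smul, eval_pow,
      Nat.sub_sub_self (Finset.mem_range_succ_iff.mp hb), eval_sub, eval_X, eval_C, sub_self,
      zero_pow hb0, smul_zero, zero_mul, smul_zero]

lemma monic_aux (n : ℕ) : ((X ^ 2 - 1 : ℝ[X]) ^ n).Monic ∧ ((X ^ 2 - 1 : ℝ[X]) ^ n).natDegree = 2 * n := by
  have h : (X ^ 2 - 1 : ℝ[X]).Monic := by
    have := monic_X_pow_sub_C (1:ℝ) (n := 2) (by norm_num)
    simpa using this
  have h2 : (X ^ 2 - 1 : ℝ[X]).natDegree = 2 := by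
    have := natDegree_X_pow_sub_C (n := 2) (r := (1:ℝ))
    simpa using this
  refine ⟨h.pow n, ?_⟩
  rw [h.natDegree_pow, h2, mul_comm]

lemma legendre_natDegree_le (n : ℕ) : (legendrePoly n).natDegree ≤ n := by
  unfold legendrePoly
  refine (natDegree_C_mul_le _ _).trans ((natDegree_iterate_derivative _ _).trans ?_)
  rw [(monic_aux n).2]; omega

lemma legendre_coeff (n : ℕ) : (legendrePoly n).coeff n ≠ 0 := by
  unfold legendrePoly
  rw [coeff_C_mul, coeff_iterate_derivative]
  have h := (monic_aux n).1
  rw [Monic, leadingCoeff, (monic_aux n).2, two_mul] at h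
  rw [h]
  have := n.factorial_ne_zero
  have h3 : (n + n).descFactorial n ≠ 0 := by
    rw [Ne, Nat.descFactorial_eq_zero_iff_lt]; omega
  simp [this, h3]

/-- expansion of polynomials in Legendre polynomials -/
lemma legendre_expand (n : ℕ) (G : ℝ[X]) (hG : G.natDegree ≤ n) :
    ∃ c : ℕ → ℝ, G = ∑ k ∈ Finset.range (n + 1), C (c k) * legendrePoly k := by
  induction n generalizing G with
  | zero =>
    have h0 : legendrePoly 0 = 1 := by simp [legendrePoly]
    refine ⟨fun _ => G.coeff 0, ?_⟩
    rw [eq_C_of_natDegree_le_zero hG]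
    simp [h0]
  | succ n ih =>
    set a := G.coeff (n+1) / (legendrePoly (n+1)).coeff (n+1) with ha
    have h1 : (G - C a * legendrePoly (n+1)).natDegree ≤ n := by
      rw [natDegree_le_iff_coeff_eq_zero]
      intro N hN
      rw [coeff_sub, coeff_C_mul]
      rcases eq_or_lt_of_le (Nat.succ_le_of_lt hN) with h | h
      · rw [← h, ha, Nat.succ_eq_add_one, div_mul_cancel₀ _ (legendre_coeff _), sub_self]
      · rw [coeff_eq_zero_of_natDegree_lt (hG.trans_lt h),
          coeff_eq_zero_of_natDegree_lt ((legendre_natDegree_le _).trans_lt h)]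
        simp
    obtain ⟨c, hc⟩ := ih _ h1
    refine ⟨Function.update c (n+1) a, ?_⟩
    rw [Finset.sum_range_succ, Function.update_self]
    rw [sub_eq_iff_eq_add] at hc
    rw [hc]
    congr 1
    refine Finset.sum_congr rfl fun k hk => ?_
    rw [Function.update_of_ne]
    have := Finset.mem_range.mp hk
    omega

/-- Wronskian polynomial. -/
noncomputable def wr (l n : ℕ) : ℝ[X] :=
  (1 - X ^ 2) * (legendrePoly n * derivative (legendrePoly l)
    - derivative (legendrePoly n) * legendrePoly l)

lemma wr_deriv (l n : ℕ) : derivative (wr l n) =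
    C ((n : ℝ) * (n + 1) - l * (l + 1)) * (legendrePoly l * legendrePoly n) := by
  have h1 := legendre_ode l
  have h2 := legendre_ode n
  have : wr l n = legendrePoly n * ((1 - X ^ 2) * derivative (legendrePoly l))
    - legendrePoly l * ((1 - X ^ 2) * derivative (legendrePoly n)) := by unfold wr; ring
  rw [this, derivative_sub, derivative_mul,
    derivative_mul (f := legendrePoly l), h1, h2]
  simp only [map_sub]
  ring

lemma wr_hasDerivAt (l n : ℕ) (x : ℝ) : HasDerivAt (fun x => (wr l n).eval x)
    (((n : ℝ) * (n + 1) - l * (l + 1)) *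
      ((legendrePoly l).eval x * (legendrePoly n).eval x)) x := by
  have := (wr l n).hasDerivAt x
  rw [wr_deriv] at this
  simpa using this

lemma lam_lt {l n : ℕ} (h : l < n) : (0:ℝ) < (n : ℝ) * (n + 1) - l * (l + 1) := by
  have : (l:ℝ) < n := by exact_mod_cast h
  have : (0:ℝ) ≤ l := by positivity
  nlinarith

lemma legendre_orth {l n : ℕ} (h : l ≠ n) :
    ∫ s in (-1:ℝ)..1, (legendrePoly l).eval s * (legendrePoly n).eval s = 0 := by
  have key : ∀ l n : ℕ, l < n →
    ∫ s in (-1:ℝ)..1, (legendrePoly l).eval s * (legendrePoly n).eval s = 0 := by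
    intro l n h
    have h1 := intervalIntegral.integral_eq_sub_of_hasDerivAt (a := (-1:ℝ)) (b := 1)
      (fun x _ => wr_hasDerivAt l n x)
      (by apply Continuous.intervalIntegrable; fun_prop)
    rw [intervalIntegral.integral_const_mul] at h1
    have h2 : (wr l n).eval 1 - (wr l n).eval (-1) = 0 := by simp [wr]
    rw [h2] at h1
    exact (mul_eq_zero.mp h1).resolve_left (lam_lt h).ne'
  rcases lt_or_gt_of_ne h with h | h
  · exact key _ _ h
  · simp_rw [mul_comm ((legendrePoly l).eval _)]
    exact key _ _ h

lemma legendre_ne_zero (n : ℕ) : legendrePoly n ≠ 0 := by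
  intro h
  have := legendre_one n
  simp [h] at this

lemma sq_int_pos (n : ℕ) (a : ℝ) (ha : a < 1) :
    0 < ∫ s in a..1, (legendrePoly n).eval s ^ 2 := by
  refine intervalIntegral.integral_pos ha (by fun_prop) (fun x _ => sq_nonneg _)
    ⟨1, ⟨ha.le, le_rfl⟩, by simp [legendre_one]⟩

lemma pos_right (n : ℕ) (r : ℝ) (h : ∀ s, r < s → s ≤ 1 → (legendrePoly n).eval s ≠ 0) :
    ∀ s, r < s → s ≤ 1 → 0 < (legendrePoly n).eval s := by
  intro s h1 h2
  by_contra! h3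
  have := intermediate_value_Icc h2 (f := fun x => (legendrePoly n).eval x) (by fun_prop)
  obtain ⟨z, hz, hz0⟩ := this (show (0:ℝ) ∈ _ from ⟨h3, by simp [legendre_one]⟩)
  exact h z (h1.trans_le hz.1) hz.2 hz0

lemma legendre_compare {l n : ℕ} (hln : l ≤ n) (t : ℝ) (ht : 0 < t)
    (hmax : ∀ s : ℝ, (legendrePoly n).eval s = 0 → s ≤ t) :
    ∀ s, t < s → s ≤ 1 → 0 < (legendrePoly n).eval s ∧
      (legendrePoly n).eval s ≤ (legendrePoly l).eval s := by
  have hpos := pos_right n t (fun s h1 _ h0 => absurd (hmax s h0) (not_le.mpr h1))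
  rcases eq_or_lt_of_le hln with rfl | hlt
  · intro s h1 h2; exact ⟨hpos s h1 h2, le_rfl⟩
  have w1 : (wr l n).eval 1 = 0 := by simp [wr]
  have hcont : Continuous fun x => (wr l n).eval x := by fun_prop
  have wneg : ∀ r, t ≤ r → r < 1 → (∀ s, r < s → s ≤ 1 → 0 < (legendrePoly l).eval s) →
      (wr l n).eval r < 0 := by
    intro r htr hr1 hp
    rw [← w1]
    have : StrictMonoOn (fun x => (wr l n).eval x) (Set.Icc r 1) := by
      refine strictMonoOn_of_deriv_pos (convex_Icc r 1) hcont.continuousOn ?_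
      intro x hx
      rw [interior_Icc] at hx
      rw [(wr_hasDerivAt l n x).deriv]
      exact mul_pos (lam_lt hlt) (mul_pos (hp x hx.1 hx.2.le) (hpos x (htr.trans_lt hx.1) hx.2.le))
    exact this ⟨le_rfl, hr1.le⟩ ⟨hr1.le, le_rfl⟩ hr1
  have hposl : ∀ s, t < s → s ≤ 1 → 0 < (legendrePoly l).eval s := by
    apply pos_right
    by_contra! hcon
    obtain ⟨s0, hs0, hs01, hs0r⟩ := hcon
    set Z := (legendrePoly l).roots.toFinset.filter (fun s => t < s ∧ s ≤ 1) with hZ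
    have hne : Z.Nonempty := ⟨s0, by simp [hZ, legendre_ne_zero, hs0, hs01, hs0r]⟩
    obtain ⟨r, hr, hrmax⟩ := Z.exists_max_image id hne
    simp only [hZ, Finset.mem_filter, Multiset.mem_toFinset, mem_roots (legendre_ne_zero l),
      IsRoot.def] at hr
    obtain ⟨hr0, htr, hr1⟩ := hr
    have hr1' : r < 1 := by
      refine lt_of_le_of_ne hr1 ?_
      rintro rfl
      rw [legendre_one] at hr0; norm_num at hr0
    have hp : ∀ s, r < s → s ≤ 1 → 0 < (legendrePoly l).eval s := by
      apply pos_right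
      intro s h1 h2 h3
      have := hrmax s (by simp [hZ, legendre_ne_zero, h2, h3, htr.trans h1])
      simp at this
      linarith
    have h1 := wneg r htr.le hr1' hp
    have h2 : 0 ≤ (derivative (legendrePoly l)).eval r := by
      have hd := ((legendrePoly l).hasDerivAt r).hasDerivWithinAt (s := Set.Ioi r)
      rw [hasDerivWithinAt_iff_tendsto_slope' (by simp)] at hd
      refine ge_of_tendsto hd ?_
      filter_upwards [Ioo_mem_nhdsGT hr1'] with s hs
      rw [slope_def_field, hr0, sub_zero]
      exact div_nonneg (hp s hs.1 hs.2.le).le (by linarith [hs.1])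
    have h3 : (wr l n).eval r = (1 - r^2) * ((legendrePoly n).eval r *
        (derivative (legendrePoly l)).eval r) := by
      simp [wr, hr0]
    have : 0 ≤ (wr l n).eval r := by
      rw [h3]
      refine mul_nonneg (by nlinarith) (mul_nonneg (hpos r htr hr1).le h2)
    linarith
  intro s hs hs1
  refine ⟨hpos s hs hs1, ?_⟩
  have hanti : AntitoneOn (fun x => (legendrePoly l).eval x / (legendrePoly n).eval x)
      (Set.Icc s 1) := by
    refine antitoneOn_of_deriv_nonpos (convex_Icc s 1) ?_ ?_ ?_
    · refine ContinuousOn.div (by fun_prop) (by fun_prop) ?_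
      intro x hx; exact (hpos x (hs.trans_le hx.1) hx.2).ne'
    · intro x hx
      rw [interior_Icc] at hx
      exact ((((legendrePoly l).hasDerivAt x).div ((legendrePoly n).hasDerivAt x)
        (hpos x (hs.trans hx.1) hx.2.le).ne').differentiableAt).differentiableWithinAt
    · intro x hx
      rw [interior_Icc] at hx
      have hd := (((legendrePoly l).hasDerivAt x).div ((legendrePoly n).hasDerivAt x)
        (hpos x (hs.trans hx.1) hx.2.le).ne')
      have : deriv (fun x => (legendrePoly l).eval x / (legendrePoly n).eval x) x = _ := hd.deriv
      rw [this]
      refine div_nonpos_of_nonpos_of_nonneg ?_ (sq_nonneg _)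
      have h1 := wneg x (hs.trans hx.1).le hx.2 (fun z h1 h2 => hposl z ((hs.trans hx.1).trans h1) h2)
      have h3 : (wr l n).eval x = (1 - x^2) * ((legendrePoly n).eval x *
        (derivative (legendrePoly l)).eval x - (derivative (legendrePoly n)).eval x *
          (legendrePoly l).eval x) := by
        simp [wr]
      rw [h3] at h1
      have h4 : 0 < 1 - x^2 := by nlinarith [hx.1, hx.2]
      have := neg_of_mul_neg_right h1 h4.le
      linarith
  have := hanti ⟨le_rfl, hs1⟩ ⟨hs1, le_rfl⟩ hs1
  simp only [legendre_one, div_one] at this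
  rwa [one_le_div (hpos s hs hs1)] at this

end LSSH

namespace LSSH
open scoped Pointwise

abbrev E3 := EuclideanSpace ℝ (Fin 3)
abbrev S2 := Metric.sphere (0 : E3) 1
noncomputable abbrev sig : Measure S2 := (volume : Measure E3).toSphere
noncomputable abbrev ip (x y : S2) : ℝ := inner (𝕜 := ℝ) (x : E3) (y : E3)

/-- action of an isometry on the sphere -/
noncomputable def rotS (Φ : E3 ≃ₗᵢ[ℝ] E3) : S2 ≃ₜ S2 where
  toFun x := ⟨Φ x, by simp⟩
  invFun x := ⟨Φ.symm x, by simp⟩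
  left_inv x := by ext1; simp
  right_inv x := by ext1; simp
  continuous_toFun := by fun_prop
  continuous_invFun := by fun_prop

lemma rotS_coe (Φ : E3 ≃ₗᵢ[ℝ] E3) (x : S2) : ((rotS Φ x : S2) : E3) = Φ x := rfl

lemma rotS_mp (Φ : E3 ≃ₗᵢ[ℝ] E3) : MeasurePreserving (rotS Φ) sig sig := by
  refine ⟨(rotS Φ).measurable, ?_⟩
  ext s hs
  rw [Measure.map_apply (rotS Φ).measurable hs,
    Measure.toSphere_apply' _ ((rotS Φ).measurable hs), Measure.toSphere_apply' _ hs]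
  congr 1
  have : Set.Ioo (0:ℝ) 1 • ((↑) '' ((rotS Φ) ⁻¹' s) : Set E3) =
      Φ ⁻¹' (Set.Ioo (0:ℝ) 1 • ((↑) '' s)) := by
    ext z
    simp only [Set.mem_smul, Set.mem_image, Set.mem_preimage]
    constructor
    · rintro ⟨r, hr, _, ⟨x, hx, rfl⟩, rfl⟩
      exact ⟨r, hr, _, ⟨_, hx, rfl⟩, by simp [rotS_coe]⟩
    · rintro ⟨r, hr, _, ⟨x, hx, rfl⟩, h⟩
      refine ⟨r, hr, _, ⟨(rotS Φ).symm x, by simpa using hx, rfl⟩, ?_⟩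
      apply Φ.injective
      rw [← h, map_smul, ← rotS_coe]
      simp
  rw [this]
  exact Φ.measurePreserving.measure_preimage_equiv (f := Φ.toMeasurableEquiv) _

lemma rotS_integral (Φ : E3 ≃ₗᵢ[ℝ] E3) (g : S2 → ℂ) :
    ∫ x, g (rotS Φ x) ∂sig = ∫ x, g x ∂sig :=
  (rotS_mp Φ).integral_comp (rotS Φ).measurableEmbedding g

/-- Gaussian half moments -/
noncomputable def J (k : ℕ) : ℝ := ∫ r in Set.Ioi (0:ℝ), r ^ k * Real.exp (-r ^ 2)

lemma J_eq (k : ℕ) : J k = (1 / 2) * Real.Gamma (((k:ℝ) + 1) / 2) := by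
  have := integral_rpow_mul_exp_neg_rpow (p := 2) (q := k) (by norm_num)
    (by have : (0:ℝ) ≤ k := by positivity
        linarith)
  rw [← this, J]
  refine setIntegral_congr_fun measurableSet_Ioi fun x hx => ?_
  simp only [Real.rpow_natCast, Real.rpow_ofNat]

lemma J_pos (k : ℕ) : 0 < J k := by
  rw [J_eq]
  have : 0 < Real.Gamma (((k:ℝ) + 1) / 2) := Real.Gamma_pos_of_pos (by positivity)
  positivity

lemma J_rec (k : ℕ) : J (k + 2) = ((k:ℝ) + 1) / 2 * J k := by
  rw [J_eq, J_eq]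
  have : (((k + 2 : ℕ) : ℝ) + 1) / 2 = ((k:ℝ) + 1) / 2 + 1 := by push_cast; ring
  rw [this, Real.Gamma_add_one (by positivity)]
  ring

lemma full_moment (k : ℕ) : ∫ z : ℝ, z ^ k * Real.exp (-z ^ 2) = (1 + (-1) ^ k) * J k := by
  have hInteg : Integrable (fun z : ℝ => z ^ k * Real.exp (-z ^ 2)) := by
    have := integrable_rpow_mul_exp_neg_mul_sq (b := 1) (by norm_num) (s := k)
      (by have : (0:ℝ) ≤ k := by positivity
          linarith)
    simpa using this
  have h := integral_add_compl (measurableSet_Ioi (a := (0:ℝ))) hInteg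
  have h2 := integral_comp_neg_Ioi 0 (fun z : ℝ => z ^ k * Real.exp (-z ^ 2))
  rw [neg_zero] at h2
  rw [← h, Set.compl_Ioi, ← h2]
  have h3 : ∀ x : ℝ, (-x) ^ k * Real.exp (-(-x) ^ 2) = (-1) ^ k * (x ^ k * Real.exp (-x ^ 2)) := by
    intro x
    rw [neg_pow x k, neg_sq]; ring
  simp_rw [h3]
  rw [integral_const_mul, J]
  ring

lemma exists_basis (y : S2) : ∃ b : OrthonormalBasis (Fin 3) ℝ E3, b 2 = y := by
  have : Orthonormal ℝ (Set.domRestrict ({2} : Set (Fin 3)) (fun _ => (y : E3))) := by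
    constructor
    · intro i; exact norm_eq_of_mem_sphere y
    · intro i j hij
      exact absurd (Subsingleton.elim i j) hij
  obtain ⟨b, hb⟩ := this.exists_orthonormalBasis_extension_of_card_eq (by simp)
  exact ⟨b, hb 2 (by simp)⟩

lemma gauss_cart (y : S2) (k : ℕ) :
    ∫ x : E3, (inner ℝ x (y : E3)) ^ k * Real.exp (-‖x‖ ^ 2) = Real.pi * ((1 + (-1) ^ k) * J k) := by
  obtain ⟨b, hb⟩ := exists_basis y
  have h1 : ∀ x : E3, (inner ℝ x (y : E3)) ^ k * Real.exp (-‖x‖ ^ 2) =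
      (fun z : E3 => (z 2) ^ k * Real.exp (-‖z‖ ^ 2)) (b.repr x) := by
    intro x
    simp only [b.repr_apply_apply, hb, LinearIsometryEquiv.norm_map, real_inner_comm]
  simp_rw [h1]
  have h1' := b.repr.measurePreserving.integral_comp b.repr.toHomeomorph.measurableEmbedding
    (fun z : E3 => (z 2) ^ k * Real.exp (-‖z‖ ^ 2))
  rw [h1']
  have h2 : ∀ z : E3, (z 2) ^ k * Real.exp (-‖z‖ ^ 2) =
      (fun w : Fin 3 → ℝ => ∏ i, (![fun s => Real.exp (-s^2), fun s => Real.exp (-s^2),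
        fun s => s ^ k * Real.exp (-s^2)] : Fin 3 → ℝ → ℝ) i (w i)) (WithLp.ofLp z) := by
    intro z
    simp only [EuclideanSpace.norm_sq_eq, Fin.sum_univ_three, Fin.prod_univ_three, neg_add,
      Real.exp_add, Real.norm_eq_abs, sq_abs]
    simp
    ring
  simp_rw [h2]
  have h2' := (PiLp.volume_preserving_ofLp (Fin 3)).integral_comp
    (MeasurableEquiv.toLp 2 (Fin 3 → ℝ)).symm.measurableEmbedding
    (fun w : Fin 3 → ℝ => ∏ i, (![fun s => Real.exp (-s^2), fun s => Real.exp (-s^2),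
        fun s => s ^ k * Real.exp (-s^2)] : Fin 3 → ℝ → ℝ) i (w i))
  rw [h2', integral_fintype_prod_volume_eq_prod]
  simp only [Fin.prod_univ_three]
  have h3 := integral_gaussian 1
  simp only [neg_mul, one_mul, div_one] at h3
  have h4 := full_moment k
  simp [h3, h4]
  exact Or.inl (Real.mul_self_sqrt Real.pi_pos.le)

lemma ioi_pow (f : ℝ → ℝ) : ∫ x : Set.Ioi (0 : ℝ), f x ∂(Measure.volumeIoiPow 2) =
    ∫ r in Set.Ioi (0:ℝ), r ^ 2 * f r := by
  simp only [Measure.volumeIoiPow, ENNReal.ofReal]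
  rw [integral_withDensity_eq_integral_smul,
    integral_subtype_comap measurableSet_Ioi fun a ↦ Real.toNNReal (a ^ 2) • f a,
    setIntegral_congr_fun measurableSet_Ioi fun x hx ↦ ?_]
  · rw [NNReal.smul_def, Real.coe_toNNReal _ (pow_nonneg hx.out.le _), smul_eq_mul]
  · exact (measurable_subtype_coe.pow_const _).real_toNNReal

lemma gauss_polar (y : S2) (k : ℕ) :
    ∫ x : E3, (inner ℝ x (y : E3)) ^ k * Real.exp (-‖x‖ ^ 2) = (∫ x, (ip x y) ^ k ∂sig) * J (k + 2) := by
  have h0 : ∫ x : E3, (inner ℝ x (y : E3)) ^ k * Real.exp (-‖x‖ ^ 2) =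
    ∫ x : ({(0)}ᶜ : Set E3), (inner ℝ x.1 (y : E3)) ^ k * Real.exp (-‖x.1‖ ^ 2)
      ∂((volume : Measure E3).comap (↑)) := by
    rw [integral_subtype_comap (measurableSet_singleton _).compl
      fun x : E3 ↦ (inner ℝ x (y : E3)) ^ k * Real.exp (-‖x‖ ^ 2), restrict_compl_singleton]
  rw [h0]
  have h1 := (volume : Measure E3).measurePreserving_homeomorphUnitSphereProd.integral_comp
        (Homeomorph.measurableEmbedding _)
        (fun z : S2 × Set.Ioi (0:ℝ) => (ip z.1 y) ^ k * (z.2.1 ^ k * Real.exp (-z.2.1 ^ 2)))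
  have h2 : Module.finrank ℝ E3 - 1 = 2 := by simp
  rw [h2, integral_prod_mul (fun x : S2 => ip x y ^ k)
    (fun r : Set.Ioi (0:ℝ) => r.1 ^ k * Real.exp (-r.1 ^ 2)),
    ioi_pow (fun r => r ^ k * Real.exp (-r ^ 2))] at h1
  have h3 : ∫ r in Set.Ioi (0:ℝ), r ^ 2 * (r ^ k * Real.exp (-r ^ 2)) = J (k + 2) := by
    rw [J]
    congr 1 with r
    ring
  rw [← h3, ← h1]
  congr 1 with x
  have hx : ‖x.1‖ ≠ 0 := norm_ne_zero_iff.mpr x.2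
  have h4 : ip ((homeomorphUnitSphereProd E3) x).1 y = ‖x.1‖⁻¹ * inner ℝ x.1 (y : E3) := by
    simp [ip, real_inner_smul_left]
  rw [h4]
  simp [mul_pow]
  field_simp

lemma moment (y : S2) (k : ℕ) :
    ∫ x, (ip x y) ^ k ∂sig = 2 * Real.pi * ∫ s in (-1:ℝ)..1, s ^ k := by
  have h := (gauss_polar y k).symm.trans (gauss_cart y k)
  rw [J_rec] at h
  have hJ := J_pos k
  have hk : (0:ℝ) < k + 1 := by positivity
  have h2 : (∫ x, (ip x y) ^ k ∂sig) * ((k + 1) / 2) = Real.pi * (1 + (-1) ^ k) := by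
    apply mul_right_cancel₀ hJ.ne'
    linarith
  rw [integral_pow]
  have : (∫ x, (ip x y) ^ k ∂sig) = Real.pi * (1 + (-1) ^ k) / ((k + 1) / 2) := by
    rw [eq_div_iff (by positivity), h2]
  rw [this, pow_succ]
  field_simp
  ring

lemma ip_mem (x y : S2) : ip x y ∈ Set.Icc (-1:ℝ) 1 := by
  have h := abs_real_inner_le_norm (x : E3) (y : E3)
  simp only [norm_eq_of_mem_sphere, mul_one] at h
  exact abs_le.mp h

lemma ip_cont (y : S2) : Continuous fun x => ip x y := by unfold ip; fun_prop

lemma pushfwd (y : S2) : Measure.map (fun x => ip x y) sig =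
    ENNReal.ofReal (2 * Real.pi) • (volume.restrict (Set.Icc (-1:ℝ) 1)) := by
  set ν1 := Measure.map (fun x => ip x y) sig with hν1
  set ν2 := ENNReal.ofReal (2 * Real.pi) • (volume.restrict (Set.Icc (-1:ℝ) 1)) with hν2
  have : IsFiniteMeasure ν2 := by
    exact Measure.smul_finite _ ENNReal.ofReal_ne_top
  have i1 : ∀ f : ℝ → ℝ, Continuous f → Integrable f ν1 := by
    intro f hf
    rw [hν1, integrable_map_measure (by fun_prop) (ip_cont y).aemeasurable]
    exact (hf.comp (ip_cont y)).integrable_of_hasCompactSupport (HasCompactSupport.of_compactSpace _)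
  have i2 : ∀ f : ℝ → ℝ, Continuous f → Integrable f ν2 := by
    intro f hf
    exact (hf.integrableOn_Icc).smul_measure ENNReal.ofReal_ne_top
  have e1 : ∀ f : ℝ → ℝ, Continuous f → ∫ s, f s ∂ν1 = ∫ x, f (ip x y) ∂sig := by
    intro f hf
    rw [hν1, integral_map (ip_cont y).aemeasurable (by fun_prop)]
  have e2 : ∀ f : ℝ → ℝ, ∫ s, f s ∂ν2 = 2 * Real.pi * ∫ s in (-1:ℝ)..1, f s := by
    intro f
    rw [hν2, integral_smul_measure, ENNReal.toReal_ofReal (by positivity), smul_eq_mul,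
      integral_Icc_eq_integral_Ioc, intervalIntegral.integral_of_le (by norm_num)]
  have hpoly : ∀ p : Polynomial ℝ, ∫ s, p.eval s ∂ν1 = ∫ s, p.eval s ∂ν2 := by
    intro p
    simp_rw [Polynomial.eval_eq_sum_range]
    rw [integral_finsetSum _ (fun i _ => i1 _ (by fun_prop)),
      integral_finsetSum _ (fun i _ => i2 _ (by fun_prop))]
    refine Finset.sum_congr rfl fun k _ => ?_
    rw [integral_const_mul, integral_const_mul, e1 _ (by fun_prop), e2, moment]
  have ae1 : ∀ᵐ s ∂ν1, s ∈ Set.Icc (-1:ℝ) 1 := by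
    refine (ae_map_iff (ip_cont y).aemeasurable (p := fun s => s ∈ Set.Icc (-1:ℝ) 1)
      measurableSet_Icc).mpr ?_
    exact Filter.Eventually.of_forall fun x => ip_mem x y
  have ae2 : ∀ᵐ s ∂ν2, s ∈ Set.Icc (-1:ℝ) 1 :=
    Measure.ae_smul_measure (ae_restrict_mem measurableSet_Icc) _
  apply ext_of_forall_integral_eq_of_IsFiniteMeasure
  intro f
  apply eq_of_abs_sub_le_all
  intro ε hε
  set M := ν1.real Set.univ + ν2.real Set.univ + 1 with hM
  have hMpos : 0 < M := by positivity
  obtain ⟨p, hp⟩ := exists_polynomial_near_of_continuousOn (-1) 1 f f.continuous.continuousOn (ε / M)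
    (by positivity)
  have b1 : ∀ ν : Measure ℝ, IsFiniteMeasure ν → (∀ᵐ s ∂ν, s ∈ Set.Icc (-1:ℝ) 1) →
      (∀ f : ℝ → ℝ, Continuous f → Integrable f ν) →
      |∫ s, p.eval s ∂ν - ∫ s, f s ∂ν| ≤ ε / M * ν.real Set.univ := by
    intro ν _ hae hi
    rw [← integral_sub (hi _ (by fun_prop)) (hi _ f.continuous)]
    rw [← Real.norm_eq_abs]
    refine norm_integral_le_of_norm_le_const ?_
    filter_upwards [hae] with s hs
    exact (hp s hs).le
  have c1 := b1 ν1 inferInstance ae1 i1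
  have c2 := b1 ν2 inferInstance ae2 i2
  rw [hpoly p] at c1
  have : ε / M * ν1.real Set.univ + ε / M * ν2.real Set.univ ≤ ε := by
    rw [← mul_add, div_mul_eq_mul_div, div_le_iff₀ hMpos]
    nlinarith
  rw [abs_le] at *
  constructor <;> linarith [c1.1, c1.2, c2.1, c2.2]

lemma archimedes (y : S2) (H : ℝ → ℝ) (hH : Measurable H) :
    ∫ x, H (ip x y) ∂sig = 2 * Real.pi * ∫ s in (-1:ℝ)..1, H s := by
  rw [← integral_map (φ := fun x => ip x y) (ip_cont y).aemeasurable
    hH.aestronglyMeasurable, pushfwd,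
    integral_smul_measure, ENNReal.toReal_ofReal (by positivity), smul_eq_mul,
      integral_Icc_eq_integral_Ioc, intervalIntegral.integral_of_le (by norm_num)]

end LSSH

namespace LSSH
open scoped ComplexConjugate

def Adm (H : ℝ → ℝ) : Prop := Measurable H ∧ ∃ C, ∀ s ∈ Set.Icc (-1:ℝ) 1, |H s| ≤ C

lemma Adm.of_cont {H : ℝ → ℝ} (h : Continuous H) : Adm H := by
  refine ⟨h.measurable, ?_⟩
  obtain ⟨C, hC⟩ := isCompact_Icc.exists_bound_of_continuousOn (s := Set.Icc (-1:ℝ) 1) h.continuousOn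
  exact ⟨C, fun s hs => hC s hs⟩

lemma cont_integrable {g : S2 → ℂ} (hg : Continuous g) : Integrable g sig :=
  hg.integrable_of_hasCompactSupport (HasCompactSupport.of_compactSpace _)

lemma Adm.integrable {H : ℝ → ℝ} (h : Adm H) {g : S2 → ℂ} (hg : Continuous g) (y : S2) :
    Integrable (fun x => (H (ip x y) : ℂ) * g x) sig := by
  obtain ⟨hm, C, hC⟩ := h
  refine (cont_integrable hg).bdd_mul (c := C) ?_ (Filter.Eventually.of_forall fun x => ?_)
  · exact (Complex.measurable_ofReal.comp (hm.comp (ip_cont y).measurable)).aestronglyMeasurable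
  · simpa using hC _ (ip_mem x y)

/-- Averaging property of degree `n` functions about `y`. -/
def Good (n : ℕ) (y : S2) (g : S2 → ℂ) : Prop :=
  Continuous g ∧ ∃ c : ℕ → ℂ, g y = ∑ k ∈ Finset.range (n + 1), c k ∧
    ∀ H : ℝ → ℝ, Adm H → ∫ x, (H (ip x y) : ℂ) * g x ∂sig =
      2 * Real.pi * ∑ k ∈ Finset.range (n + 1),
        c k * ((∫ s in (-1:ℝ)..1, H s * (legendrePoly k).eval s : ℝ) : ℂ)

lemma good_zero (n : ℕ) (y : S2) : Good n y 0 :=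
  ⟨continuous_zero, 0, by simp, by simp⟩

lemma Good.add {n : ℕ} {y : S2} {g h : S2 → ℂ} (hg : Good n y g) (hh : Good n y h) :
    Good n y (g + h) := by
  obtain ⟨g1, c, g2, g3⟩ := hg
  obtain ⟨h1, d, h2, h3⟩ := hh
  refine ⟨g1.add h1, c + d, ?_, fun H hH => ?_⟩
  · simp [g2, h2, Finset.sum_add_distrib]
  · simp only [Pi.add_apply, mul_add, add_mul, Finset.sum_add_distrib]
    rw [integral_add (hH.integrable g1 y) (hH.integrable h1 y), g3 H hH, h3 H hH]

lemma Good.smul {n : ℕ} {y : S2} {g : S2 → ℂ} (a : ℂ) (hg : Good n y g) :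
    Good n y (a • g) := by
  obtain ⟨g1, c, g2, g3⟩ := hg
  refine ⟨g1.const_smul a, a • c, ?_, fun H hH => ?_⟩
  · simp [g2, Finset.mul_sum]
  · have : ∀ x, (H (ip x y) : ℂ) * (a • g) x = a * ((H (ip x y) : ℂ) * g x) := by
      intro x; simp; ring
    simp_rw [this]
    rw [integral_const_mul, g3 H hH]
    simp only [Pi.smul_apply, smul_eq_mul, mul_assoc, ← Finset.mul_sum]
    ring

/-- planar rotation -/
noncomputable def rotLin (θ : ℝ) : E3 →ₗ[ℝ] E3 where
  toFun z := !₂[Real.cos θ * z 0 - Real.sin θ * z 1, Real.sin θ * z 0 + Real.cos θ * z 1, z 2]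
  map_add' x y := by
    ext i; fin_cases i <;> simp <;> ring
  map_smul' a x := by
    ext i; fin_cases i <;> simp <;> ring

noncomputable def rotIso (θ : ℝ) : E3 ≃ₗᵢ[ℝ] E3 :=
  LinearIsometry.toLinearIsometryEquiv (⟨rotLin θ, by
    intro x
    rw [EuclideanSpace.norm_eq, EuclideanSpace.norm_eq]
    congr 1
    simp [Fin.sum_univ_three, rotLin]
    linear_combination (x 0 ^ 2 + x 1 ^ 2) * Real.sin_sq_add_cos_sq θ⟩) rfl

lemma rotIso_apply (θ : ℝ) (z : E3) : rotIso θ z =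
    !₂[Real.cos θ * z 0 - Real.sin θ * z 1, Real.sin θ * z 0 + Real.cos θ * z 1, z 2] := rfl

noncomputable def ww (b : OrthonormalBasis (Fin 3) ℝ E3) (x : S2) : ℂ :=
  (b.repr x 0 : ℂ) + (b.repr x 1 : ℂ) * Complex.I

noncomputable def mono (b : OrthonormalBasis (Fin 3) ℝ E3) (i j k : ℕ) (x : S2) : ℂ :=
  ww b x ^ i * (conj (ww b x)) ^ j * ((b.repr x 2 : ℝ) : ℂ) ^ k

lemma ww_cont (b : OrthonormalBasis (Fin 3) ℝ E3) : Continuous (ww b) := by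
  unfold ww; fun_prop

lemma mono_cont (b : OrthonormalBasis (Fin 3) ℝ E3) (i j k : ℕ) : Continuous (mono b i j k) := by
  have := ww_cont b
  unfold mono
  have h2 : Continuous fun x => conj (ww b x) := Complex.continuous_conj.comp this
  fun_prop

lemma repr_two {b : OrthonormalBasis (Fin 3) ℝ E3} {y : S2} (hb : b 2 = y) (x : S2) :
    b.repr x 2 = ip x y := by
  rw [b.repr_apply_apply, hb, real_inner_comm]

lemma ww_mul_conj (b : OrthonormalBasis (Fin 3) ℝ E3) (x : S2) :
    ww b x * conj (ww b x) = 1 - ((b.repr x 2 : ℝ) : ℂ) ^ 2 := by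
  have h : ‖b.repr x‖ ^ 2 = 1 := by simp
  rw [EuclideanSpace.norm_sq_eq, Fin.sum_univ_three] at h
  simp only [Real.norm_eq_abs, sq_abs] at h
  rw [Complex.mul_conj, ww, Complex.normSq_add_mul_I]
  rw [← Complex.ofReal_pow, ← Complex.ofReal_one, ← Complex.ofReal_sub]
  congr 1
  linarith

lemma mono_good {b : OrthonormalBasis (Fin 3) ℝ E3} {y : S2} (hb : b 2 = y) {n i j k : ℕ}
    (hn : i + j + k ≤ n) : Good n y (mono b i j k) := by
  refine ⟨mono_cont b i j k, ?_⟩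
  by_cases hij : i = j
  · subst hij
    obtain ⟨c, hc⟩ := legendre_expand n ((1 - Polynomial.X ^ 2) ^ i * Polynomial.X ^ k) (by
      have : (1 - Polynomial.X ^ 2 : Polynomial ℝ).natDegree ≤ 2 := by compute_degree
      refine Polynomial.natDegree_mul_le.trans ?_
      refine (add_le_add (Polynomial.natDegree_pow_le.trans (Nat.mul_le_mul_left i this))
        (Polynomial.natDegree_X_pow_le k)).trans ?_
      omega)
    have hm : ∀ x : S2, mono b i i k x = (((1 - ip x y ^ 2) ^ i * ip x y ^ k : ℝ) : ℂ) := by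
      intro x
      rw [mono, ← mul_pow, ww_mul_conj, repr_two hb]
      push_cast; rfl
    have hev : ∀ s : ℝ, (1 - s ^ 2) ^ i * s ^ k =
        ∑ l ∈ Finset.range (n + 1), c l * (legendrePoly l).eval s := by
      intro s
      have := congrArg (Polynomial.eval s) hc
      simpa [Polynomial.eval_finsetSum] using this
    refine ⟨fun l => (c l : ℂ), ?_, fun H hH => ?_⟩
    · have h1 : ip y y = 1 := by simp [ip]
      rw [hm, hev, h1]
      simp [legendre_one]
    · simp_rw [hm]
      simp_rw [← Complex.ofReal_mul]
      rw [integral_complex_ofReal, archimedes y (fun s => H s * ((1 - s ^ 2) ^ i * s ^ k))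
        (hH.1.mul (by fun_prop))]
      simp_rw [hev, Finset.mul_sum]
      rw [intervalIntegral.integral_finsetSum]
      · push_cast
        rw [Finset.mul_sum]
        refine Finset.sum_congr rfl fun l _ => ?_
        rw [← Complex.ofReal_mul, ← intervalIntegral.integral_const_mul]
        congr 3 with s
        ring
      · intro l _
        obtain ⟨C, hC⟩ := hH.2
        rw [intervalIntegrable_iff_integrableOn_Icc_of_le (by norm_num)]
        have hc : Continuous fun s : ℝ => c l * (legendrePoly l).eval s := by fun_prop
        refine (hc.integrableOn_Icc).bdd_mul (c := C) hH.1.aestronglyMeasurable ?_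
        filter_upwards [ae_restrict_mem measurableSet_Icc] with s hs
        exact hC s hs
  · refine ⟨0, ?_, fun H hH => ?_⟩
    · have h0 : ww b y = 0 := by
        have : b.repr (y : E3) = EuclideanSpace.single 2 1 := by rw [← hb, b.repr_self]
        simp [ww, this]
      have : i ≠ 0 ∨ j ≠ 0 := by omega
      rcases this with h | h <;> simp [mono, h0, h]
    · simp only [Pi.zero_apply, zero_mul, Finset.sum_const_zero, mul_zero]
      set θ : ℝ := Real.pi / ((i:ℝ) - j) with hθ
      have hij' : (i:ℝ) - j ≠ 0 := by
        rw [sub_ne_zero]; exact_mod_cast hij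
      set Φ : E3 ≃ₗᵢ[ℝ] E3 := (b.repr.trans (rotIso θ)).trans b.repr.symm with hΦ
      have hrepr : ∀ x : S2, b.repr (rotS Φ x) = rotIso θ (b.repr x) := by
        intro x; simp [rotS_coe, hΦ]
      have hw : ∀ x, ww b (rotS Φ x) = Complex.exp (θ * Complex.I) * ww b x := by
        intro x
        rw [ww, hrepr, rotIso_apply, Complex.exp_mul_I, ww]
        simp
        linear_combination (-Complex.sin θ * (b.repr x 1 : ℂ)) * Complex.I_sq
      have h2 : ∀ x, ip (rotS Φ x) y = ip x y := by
        intro x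
        rw [← repr_two hb, ← repr_two hb, hrepr, rotIso_apply]
        simp
      have hphase : Complex.exp (θ * Complex.I) ^ i * (conj (Complex.exp (θ * Complex.I))) ^ j = -1 := by
        rw [← Complex.exp_conj, ← Complex.exp_nat_mul, ← Complex.exp_nat_mul, ← Complex.exp_add,
          ← Complex.exp_pi_mul_I]
        congr 1
        simp [hθ]
        have : (i:ℂ) - j ≠ 0 := by exact_mod_cast hij'
        field_simp
        ring
      have hI := rotS_integral Φ (fun x => (H (ip x y) : ℂ) * mono b i j k x)
      have h3 : ∀ x, (H (ip (rotS Φ x) y) : ℂ) * mono b i j k (rotS Φ x) =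
          - ((H (ip x y) : ℂ) * mono b i j k x) := by
        intro x
        rw [mono, mono, repr_two hb, repr_two hb, h2, hw, map_mul, mul_pow, mul_pow]
        linear_combination ((H (ip x y) : ℂ) * ww b x ^ i * (conj (ww b x)) ^ j * (ip x y : ℂ) ^ k) * hphase
      simp_rw [h3] at hI
      rw [integral_neg] at hI
      have : (2:ℂ) * ∫ x, (H (ip x y) : ℂ) * mono b i j k x ∂sig = 0 := by
        linear_combination -hI
      simpa using this

/-- span of monomials -/
noncomputable def VV (b : OrthonormalBasis (Fin 3) ℝ E3) (n : ℕ) : Submodule ℂ (S2 → ℂ) :=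
  Submodule.span ℂ {g | ∃ i j k : ℕ, i + j + k ≤ n ∧ g = mono b i j k}

lemma VV_good {b : OrthonormalBasis (Fin 3) ℝ E3} {y : S2} (hb : b 2 = y) {n : ℕ} {g : S2 → ℂ}
    (hg : g ∈ VV b n) : Good n y g := by
  induction hg using Submodule.span_induction with
  | mem g h => obtain ⟨i, j, k, h1, rfl⟩ := h; exact mono_good hb h1
  | zero => exact good_zero n y
  | add g h _ _ h1 h2 => exact h1.add h2
  | smul a g _ h => exact h.smul a

lemma VV_mul (b : OrthonormalBasis (Fin 3) ℝ E3) {m n : ℕ} {g h : S2 → ℂ} (hg : g ∈ VV b m)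
    (hh : h ∈ VV b n) : g * h ∈ VV b (m + n) := by
  have h1 := Submodule.mul_mem_mul hg hh
  rw [VV, VV, Submodule.span_mul_span] at h1
  refine Submodule.span_mono ?_ h1
  rintro _ ⟨_, ⟨i, j, k, h1, rfl⟩, _, ⟨i', j', k', h2, rfl⟩, rfl⟩
  refine ⟨i + i', j + j', k + k', by omega, ?_⟩
  ext x
  simp only [mono, Pi.mul_apply, pow_add]
  ring

lemma VV_one (b : OrthonormalBasis (Fin 3) ℝ E3) : (1 : S2 → ℂ) ∈ VV b 0 :=
  Submodule.subset_span ⟨0, 0, 0, by simp, by ext x; simp [mono]⟩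

lemma VV_pow (b : OrthonormalBasis (Fin 3) ℝ E3) {g : S2 → ℂ} (hg : g ∈ VV b 1) (d : ℕ) :
    g ^ d ∈ VV b d := by
  induction d with
  | zero => simpa using VV_one b
  | succ d ih => rw [pow_succ]; exact VV_mul b ih hg

lemma VV_coord (b : OrthonormalBasis (Fin 3) ℝ E3) (l : Fin 3) :
    (fun x : S2 => (((x : E3) l : ℝ) : ℂ)) ∈ VV b 1 := by
  have m1 : mono b 1 0 0 ∈ VV b 1 := Submodule.subset_span ⟨1, 0, 0, by simp, rfl⟩
  have m2 : mono b 0 1 0 ∈ VV b 1 := Submodule.subset_span ⟨0, 1, 0, by simp, rfl⟩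
  have m3 : mono b 0 0 1 ∈ VV b 1 := Submodule.subset_span ⟨0, 0, 1, by simp, rfl⟩
  have key : (fun x : S2 => (((x : E3) l : ℝ) : ℂ)) =
      (((b 0 l : ℝ) : ℂ) / 2 - (b 1 l : ℝ) / 2 * Complex.I) • mono b 1 0 0 +
      (((b 0 l : ℝ) : ℂ) / 2 + (b 1 l : ℝ) / 2 * Complex.I) • mono b 0 1 0 +
      ((b 2 l : ℝ) : ℂ) • mono b 0 0 1 := by
    ext x
    have h := congrArg (fun z : E3 => z l) (b.sum_repr (x : E3))
    simp [Fin.sum_univ_three] at h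
    rw [← h]
    simp [mono, ww]
    linear_combination ((b.repr x 1 : ℂ) * (b 1 l : ℝ)) * Complex.I_sq
  rw [key]
  exact Submodule.add_mem _ (Submodule.add_mem _ (Submodule.smul_mem _ _ m1)
    (Submodule.smul_mem _ _ m2)) (Submodule.smul_mem _ _ m3)

lemma VV_mono (b : OrthonormalBasis (Fin 3) ℝ E3) {m n : ℕ} (h : m ≤ n) : VV b m ≤ VV b n := by
  refine Submodule.span_mono ?_
  rintro _ ⟨i, j, k, h1, rfl⟩
  exact ⟨i, j, k, h1.trans h, rfl⟩

def IsPolyS (n : ℕ) (f : S2 → ℂ) : Prop := ∃ p : MvPolynomial (Fin 3) ℂ, p.totalDegree ≤ n ∧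
      ∀ x : S2, f x = MvPolynomial.eval (fun i => ((x : E3) i : ℂ)) p

lemma poly_good {n : ℕ} {f : S2 → ℂ} (hf : IsPolyS n f) (y : S2) : Good n y f := by
  obtain ⟨b, hb⟩ := exists_basis y
  apply VV_good hb
  obtain ⟨p, hp, hfp⟩ := hf
  have : f = ∑ d ∈ p.support, (p.coeff d) • ∏ i, (fun x : S2 => (((x : E3) i : ℝ) : ℂ)) ^ (d i) := by
    ext x
    rw [hfp, MvPolynomial.eval_eq']
    simp [Finset.sum_apply]
  rw [this]
  refine Submodule.sum_mem _ fun d hd => Submodule.smul_mem _ _ ?_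
  rw [Fin.prod_univ_three]
  have hdeg := (MvPolynomial.le_totalDegree hd).trans hp
  rw [Finsupp.sum_fintype _ _ (by simp), Fin.sum_univ_three] at hdeg
  exact VV_mono b hdeg (VV_mul b (VV_mul b (VV_pow b (VV_coord b 0) _) (VV_pow b (VV_coord b 1) _))
    (VV_pow b (VV_coord b 2) _))

/-- zonal polynomials are polynomials on the sphere; directly via the averaging property -/
lemma zonal_good (l : ℕ) (x y : S2) :
    Good l y (fun z => (((legendrePoly l).eval (ip z x) : ℝ) : ℂ)) := by
  obtain ⟨b, hb⟩ := exists_basis y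
  apply VV_good hb
  have h1 : (fun z : S2 => (ip z x : ℂ)) ∈ VV b 1 := by
    have : (fun z : S2 => (ip z x : ℂ)) =
        ∑ i, (((x : E3) i : ℝ) : ℂ) • (fun z : S2 => (((z : E3) i : ℝ) : ℂ)) := by
      ext z
      simp [ip, PiLp.inner_apply]
    rw [this]
    exact Submodule.sum_mem _ fun i _ => Submodule.smul_mem _ _ (VV_coord b i)
  have : (fun z => (((legendrePoly l).eval (ip z x) : ℝ) : ℂ)) =
      ∑ k ∈ Finset.range ((legendrePoly l).natDegree + 1),
        ((legendrePoly l).coeff k : ℂ) • (fun z : S2 => (ip z x : ℂ)) ^ k := by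
    ext z
    rw [Polynomial.eval_eq_sum_range]
    simp
  rw [this]
  refine Submodule.sum_mem _ fun k hk => Submodule.smul_mem _ _ ?_
  refine VV_mono b ?_ (VV_pow b h1 k)
  have := Finset.mem_range.mp hk
  have := legendre_natDegree_le l
  omega

end LSSH

namespace LSSH
open scoped ComplexConjugate

noncomputable def NN (l : ℕ) : ℝ := ∫ s in (-1:ℝ)..1, (legendrePoly l).eval s ^ 2

lemma NN_pos (l : ℕ) : 0 < NN l := sq_int_pos l (-1) (by norm_num)

lemma ip_comm (x y : S2) : ip x y = ip y x := real_inner_comm _ _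

lemma adm_leg (l : ℕ) : Adm (fun s => (legendrePoly l).eval s) :=
  Adm.of_cont (by fun_prop)

/-- the projection onto degree `l` harmonics -/
noncomputable def Pj (l : ℕ) (f : S2 → ℂ) (y : S2) : ℂ :=
  ((1 / (2 * Real.pi * NN l) : ℝ) : ℂ) *
    ∫ z, (((legendrePoly l).eval (ip z y) : ℝ) : ℂ) * f z ∂sig

lemma good_proj {n : ℕ} {y : S2} {f : S2 → ℂ} (hf : Good n y f) :
    f y = ∑ k ∈ Finset.range (n + 1), Pj k f y ∧
    ∀ H : ℝ → ℝ, Adm H → ∫ x, (H (ip x y) : ℂ) * f x ∂sig =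
      2 * Real.pi * ∑ k ∈ Finset.range (n + 1),
        Pj k f y * ((∫ s in (-1:ℝ)..1, H s * (legendrePoly k).eval s : ℝ) : ℂ) := by
  obtain ⟨_, c, h1, h2⟩ := hf
  have hc : ∀ k ∈ Finset.range (n + 1), c k = Pj k f y := by
    intro k hk
    rw [Pj, h2 _ (adm_leg k), Finset.sum_eq_single_of_mem k hk]
    · have hN : ((NN k : ℝ) : ℂ) ≠ 0 := by exact_mod_cast (NN_pos k).ne'
      have hpi : (Real.pi : ℂ) ≠ 0 := by exact_mod_cast Real.pi_ne_zero
      have : (∫ s in (-1:ℝ)..1, (legendrePoly k).eval s * (legendrePoly k).eval s) = NN k := by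
        simp [NN, sq]
      rw [this]
      push_cast
      field_simp
    · intro j _ hj
      rw [legendre_orth hj.symm]
      simp
  refine ⟨h1.trans (Finset.sum_congr rfl hc), fun H hH => ?_⟩
  rw [h2 H hH]
  congr 1
  exact Finset.sum_congr rfl fun k hk => by rw [hc k hk]

lemma zonal_orth {k l : ℕ} (h : k < l) (x y : S2) :
    ∫ z, (((legendrePoly k).eval (ip z x) : ℝ) : ℂ) * (((legendrePoly l).eval (ip z y) : ℝ) : ℂ) ∂sig
      = 0 := by
  obtain ⟨_, c, _, h2⟩ := zonal_good k x y
  have := h2 _ (adm_leg l)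
  simp_rw [mul_comm (((legendrePoly k).eval _ : ℝ) : ℂ)]
  rw [this, Finset.sum_eq_zero, mul_zero]
  intro j hj
  have := Finset.mem_range.mp hj
  rw [legendre_orth (by omega)]
  simp

lemma funk (l : ℕ) (x y : S2) {H : ℝ → ℝ} (hH : Adm H) :
    ∫ z, (H (ip z x) : ℂ) * (((legendrePoly l).eval (ip z y) : ℝ) : ℂ) ∂sig =
      2 * Real.pi * ((∫ s in (-1:ℝ)..1, H s * (legendrePoly l).eval s : ℝ) : ℂ) *
        (((legendrePoly l).eval (ip x y) : ℝ) : ℂ) := by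
  obtain ⟨h1, h2⟩ := good_proj (zonal_good l y x)
  have h0 : ∀ k ∈ Finset.range l,
      Pj k (fun z => (((legendrePoly l).eval (ip z y) : ℝ) : ℂ)) x = 0 := by
    intro k hk
    rw [Pj, zonal_orth (Finset.mem_range.mp hk), mul_zero]
  rw [h2 H hH, h1, Finset.sum_range_succ, Finset.sum_range_succ, Finset.sum_eq_zero,
    Finset.sum_eq_zero h0]
  · ring
  · intro k hk
    rw [h0 k hk, zero_mul]

lemma ip_cont2 : Continuous fun p : S2 × S2 => ip p.1 p.2 := by
  unfold ip; fun_prop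

lemma fub {K : ℝ → ℝ} (hK : Continuous K) {u v : S2 → ℂ} (hu : Integrable u sig)
    (hv : Integrable v sig) :
    ∫ x, u x * ∫ z, (K (ip z x) : ℂ) * v z ∂sig ∂sig =
      ∫ z, (∫ x, (K (ip x z) : ℂ) * u x ∂sig) * v z ∂sig := by
  have hInteg : Integrable (fun p : S2 × S2 => (K (ip p.1 p.2) : ℂ) * (u p.1 * v p.2)) (sig.prod sig) := by
    obtain ⟨_, C, hC⟩ := Adm.of_cont hK
    refine (hu.mul_prod hv).bdd_mul (c := C) ?_ (Filter.Eventually.of_forall fun p => ?_)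
    · exact (Complex.continuous_ofReal.comp (hK.comp ip_cont2)).aestronglyMeasurable
    · simpa using hC _ (ip_mem p.1 p.2)
  have h1 : ∀ x, u x * ∫ z, (K (ip z x) : ℂ) * v z ∂sig =
      ∫ z, (K (ip x z) : ℂ) * (u x * v z) ∂sig := by
    intro x
    rw [← integral_const_mul]
    congr 1 with z
    rw [ip_comm]; ring
  have h2 : ∀ z, (∫ x, (K (ip x z) : ℂ) * u x ∂sig) * v z =
      ∫ x, (K (ip x z) : ℂ) * (u x * v z) ∂sig := by
    intro z
    rw [← integral_mul_const]
    congr 1 with x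
    ring
  simp_rw [h1, h2]
  exact integral_integral_swap hInteg

lemma Pj_cont (l : ℕ) {f : S2 → ℂ} (hf : Continuous f) : Continuous (Pj l f) := by
  unfold Pj
  refine continuous_const.mul ?_
  have := continuous_parametric_integral_of_continuous (μ := sig) (s := Set.univ)
    (f := fun (y : S2) (z : S2) => (((legendrePoly l).eval (ip z y) : ℝ) : ℂ) * f z) (by
      have : Continuous fun p : S2 × S2 => ip p.2 p.1 := ip_cont2.comp continuous_swap
      have h3 : Continuous fun s : ℝ => (legendrePoly l).eval s := by fun_prop
      exact (Complex.continuous_ofReal.comp (h3.comp this)).mul (hf.comp continuous_snd))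
    isCompact_univ
  simpa using this

lemma op_Pj (l : ℕ) {f : S2 → ℂ} (hf : Continuous f) (y : S2) {H : ℝ → ℝ} (hH : Adm H) :
    ∫ x, (H (ip x y) : ℂ) * Pj l f x ∂sig =
      2 * Real.pi * ((∫ s in (-1:ℝ)..1, H s * (legendrePoly l).eval s : ℝ) : ℂ) * Pj l f y := by
  have hu : Integrable (fun x => (H (ip x y) : ℂ)) sig := by
    simpa using hH.integrable (continuous_const (y := (1:ℂ))) y
  have h3 : Continuous fun s : ℝ => (legendrePoly l).eval s := by fun_prop
  have hF := fub h3 hu (cont_integrable hf)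
  have hz : ∀ z, (∫ x, (((legendrePoly l).eval (ip x z) : ℝ) : ℂ) * (H (ip x y) : ℂ) ∂sig) * f z =
      2 * Real.pi * ((∫ s in (-1:ℝ)..1, H s * (legendrePoly l).eval s : ℝ) : ℂ) *
        ((((legendrePoly l).eval (ip z y) : ℝ) : ℂ) * f z) := by
    intro z
    simp_rw [mul_comm (((legendrePoly l).eval (ip _ z) : ℝ) : ℂ)]
    rw [funk l y z hH, ip_comm z y]
    ring
  simp_rw [hz] at hF
  rw [integral_const_mul] at hF
  unfold Pj
  simp_rw [mul_left_comm (H (ip _ y) : ℂ)]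
  rw [integral_const_mul, hF]
  ring

lemma Pj_conj (l : ℕ) (f : S2 → ℂ) (y : S2) : conj (Pj l f y) = Pj l (fun z => conj (f z)) y := by
  rw [Pj, Pj, map_mul, Complex.conj_ofReal, ← integral_conj]
  simp

lemma Pj_orth {k l : ℕ} (h : k ≠ l) {f : S2 → ℂ} (hf : Continuous f) :
    ∫ x, conj (Pj k f x) * Pj l f x ∂sig = 0 := by
  have hc : Continuous fun z => conj (f z) := Complex.continuous_conj.comp hf
  have h3 : Continuous fun s : ℝ => (legendrePoly k).eval s := by fun_prop
  have hF := fub h3 (cont_integrable (Pj_cont l hf)) (cont_integrable hc)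
  have hz : ∀ z, ∫ x, (((legendrePoly k).eval (ip x z) : ℝ) : ℂ) * Pj l f x ∂sig = 0 := by
    intro z
    rw [op_Pj l hf z (adm_leg k), legendre_orth h]
    simp
  simp_rw [hz] at hF
  simp only [zero_mul, integral_zero] at hF
  simp_rw [Pj_conj]
  have : ∀ x, Pj k (fun z => conj (f z)) x * Pj l f x = ((1 / (2 * Real.pi * NN k) : ℝ) : ℂ) *
      (Pj l f x * ∫ z, (((legendrePoly k).eval (ip z x) : ℝ) : ℂ) * conj (f z) ∂sig) := by
    intro x
    rw [Pj]; ring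
  simp_rw [this]
  rw [integral_const_mul, hF, mul_zero]

lemma normsq_comb (n : ℕ) (α : ℕ → ℝ) {f : S2 → ℂ} (hf : Continuous f) :
    ∫ x, ‖∑ l ∈ Finset.range n, (α l : ℂ) * Pj l f x‖ ^ 2 ∂sig =
      ∑ l ∈ Finset.range n, α l ^ 2 * ∫ x, ‖Pj l f x‖ ^ 2 ∂sig := by
  have hn : ∀ z : ℂ, ((‖z‖ ^ 2 : ℝ) : ℂ) = conj z * z := by
    intro z; rw [Complex.conj_mul']; push_cast; rfl
  apply Complex.ofReal_injective
  rw [← integral_complex_ofReal]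
  push_cast
  simp_rw [← integral_complex_ofReal, hn, ← Complex.ofReal_pow, hn]
  have hexp : ∀ x, conj (∑ l ∈ Finset.range n, (α l : ℂ) * Pj l f x) *
      (∑ l ∈ Finset.range n, (α l : ℂ) * Pj l f x) =
      ∑ k ∈ Finset.range n, ∑ l ∈ Finset.range n,
        ((α k : ℂ) * α l) * (conj (Pj k f x) * Pj l f x) := by
    intro x
    rw [map_sum, Finset.sum_mul_sum]
    refine Finset.sum_congr rfl fun k _ => Finset.sum_congr rfl fun l _ => ?_
    rw [map_mul, Complex.conj_ofReal]; ring
  simp_rw [hexp]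
  have hi : ∀ k l, Integrable (fun x => ((α k : ℂ) * α l) * (conj (Pj k f x) * Pj l f x)) sig := by
    intro k l
    refine cont_integrable ?_
    exact continuous_const.mul ((Complex.continuous_conj.comp (Pj_cont k hf)).mul (Pj_cont l hf))
  rw [integral_finsetSum _ fun k _ => integrable_finsetSum _ fun l _ => hi k l]
  refine Finset.sum_congr rfl fun k hk => ?_
  rw [integral_finsetSum _ fun l _ => hi k l, Finset.sum_eq_single_of_mem k hk]
  · rw [integral_const_mul]; push_cast; ring
  · intro l _ hl
    rw [integral_const_mul, Pj_orth hl.symm hf, mul_zero]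

end LSSH

namespace LSSH
open scoped ComplexConjugate

lemma cs_aux {A B X : ℝ} (hA : 0 < A) (h : ∀ lam : ℝ, 0 ≤ lam ^ 2 * A - 2 * lam * X + B) :
    X ^ 2 ≤ A * B := by
  have h1 := h (X / A)
  have h2 : (X / A) ^ 2 * A - 2 * (X / A) * X + B = B - X ^ 2 / A := by
    field_simp; ring
  rw [h2, sub_nonneg, div_le_iff₀ hA] at h1
  linarith

noncomputable def hh (L : ℕ) (t : ℝ) : ℝ → ℝ := (Set.Ici t).indicator fun s => (legendrePoly L).eval s

lemma hh_adm (L : ℕ) (t : ℝ) : Adm (hh L t) := by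
  obtain ⟨hm, C, hC⟩ := adm_leg L
  refine ⟨hm.indicator measurableSet_Ici, C, fun s hs => ?_⟩
  unfold hh
  by_cases h : s ∈ Set.Ici t
  · rw [Set.indicator_of_mem h]; exact hC s hs
  · rw [Set.indicator_of_notMem h]; simpa using (abs_nonneg _).trans (hC s hs)

lemma ind_int {t : ℝ} (ht : t ∈ Set.Ioo (0:ℝ) 1) (F : ℝ → ℝ) :
    ∫ s in (-1:ℝ)..1, (Set.Ici t).indicator F s = ∫ s in t..1, F s := by
  rw [intervalIntegral.integral_of_le (by norm_num), intervalIntegral.integral_of_le ht.2.le,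
    integral_indicator measurableSet_Ici, Measure.restrict_restrict measurableSet_Ici,
    ← integral_Icc_eq_integral_Ioc]
  congr 2
  ext s
  simp only [Set.mem_inter_iff, Set.mem_Ici, Set.mem_Ioc, Set.mem_Icc]
  have := ht.1
  constructor
  · rintro ⟨a, b, c⟩; exact ⟨a, c⟩
  · rintro ⟨a, b⟩; exact ⟨a, by linarith, b⟩

lemma hh_mul_int {t : ℝ} (ht : t ∈ Set.Ioo (0:ℝ) 1) (L : ℕ) (F : ℝ → ℝ) :
    ∫ s in (-1:ℝ)..1, hh L t s * F s = ∫ s in t..1, (legendrePoly L).eval s * F s := by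
  rw [← ind_int ht]
  congr 1 with s
  unfold hh
  rw [Set.indicator_mul_left]

/-- spherical cap -/
def cap (t : ℝ) (y : S2) : Set S2 := {x | t ≤ ip x y}

lemma cap_meas (t : ℝ) (y : S2) : MeasurableSet (cap t y) :=
  measurableSet_le measurable_const (ip_cont y).measurable

lemma cap_vol {t : ℝ} (ht : t ∈ Set.Ioo (0:ℝ) 1) (y : S2) :
    (sig (cap t y)).toReal = 2 * Real.pi * (1 - t) := by
  have h := archimedes y ((Set.Ici t).indicator fun _ => 1) (measurable_const.indicator measurableSet_Ici)
  rw [ind_int ht] at h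
  simp at h
  rw [← h, ← Measure.real, ← integral_indicator_one (cap_meas t y)]
  rfl

lemma hh_sq {t : ℝ} (ht : t ∈ Set.Ioo (0:ℝ) 1) (L : ℕ) (y : S2) :
    ∫ x, hh L t (ip x y) ^ 2 ∂sig = 2 * Real.pi * ∫ s in t..1, (legendrePoly L).eval s ^ 2 := by
  rw [archimedes y (fun s => hh L t s ^ 2) ((hh_adm L t).1.pow_const 2)]
  congr 1
  have := hh_mul_int ht L (hh L t)
  simp_rw [sq]
  rw [this]
  apply intervalIntegral.integral_congr
  intro s hs
  rw [Set.uIcc_of_le ht.2.le] at hs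
  simp only [hh]
  rw [Set.indicator_of_mem (by exact hs.1)]

/-- pointwise bound -/
lemma pointwise {t : ℝ} (ht : t ∈ Set.Ioo (0:ℝ) 1) (L : ℕ) {g : S2 → ℂ} (hg : Continuous g) (y : S2) :
    ‖∫ x, (hh L t (ip x y) : ℂ) * g x ∂sig‖ ^ 2 ≤
      (2 * Real.pi * ∫ s in t..1, (legendrePoly L).eval s ^ 2) *
        ∫ x, (cap t y).indicator (fun x => ‖g x‖ ^ 2) x ∂sig := by
  obtain ⟨hm, C, hC⟩ := hh_adm L t
  have hc0 := sq_int_pos L t ht.2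
  have hA : 0 < 2 * Real.pi * ∫ s in t..1, (legendrePoly L).eval s ^ 2 := by
    have := Real.pi_pos; positivity
  have hmeas : Measurable fun x : S2 => hh L t (ip x y) := hm.comp (ip_cont y).measurable
  have i1 : Integrable (fun x => hh L t (ip x y) ^ 2) sig := by
    refine Integrable.of_bound (C := C ^ 2) (hmeas.pow_const 2).aestronglyMeasurable
      (Filter.Eventually.of_forall fun x => ?_)
    rw [norm_pow]
    exact pow_le_pow_left₀ (norm_nonneg _) (hC _ (ip_mem x y)) 2
  have i2 : Integrable (fun x => ‖(hh L t (ip x y) : ℂ) * g x‖) sig :=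
    ((hh_adm L t).integrable hg y).norm
  have i3 : Integrable ((cap t y).indicator (fun x => ‖g x‖ ^ 2)) sig := by
    refine Integrable.indicator ?_ (cap_meas t y)
    exact (hg.norm.pow 2).integrable_of_hasCompactSupport (HasCompactSupport.of_compactSpace _)
  have hX : ‖∫ x, (hh L t (ip x y) : ℂ) * g x ∂sig‖ ^ 2 ≤
      (∫ x, ‖(hh L t (ip x y) : ℂ) * g x‖ ∂sig) ^ 2 :=
    pow_le_pow_left₀ (norm_nonneg _) (norm_integral_le_integral_norm _) 2
  refine hX.trans (cs_aux hA fun lam => ?_)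
  have i4 : Integrable (fun x => lam ^ 2 * hh L t (ip x y) ^ 2 -
      2 * lam * ‖(hh L t (ip x y) : ℂ) * g x‖) sig := (i1.const_mul _).sub (i2.const_mul _)
  rw [← hh_sq ht L y, ← integral_const_mul, ← integral_const_mul, ← integral_sub (i1.const_mul _)
    (i2.const_mul _), ← integral_add i4 i3]
  refine integral_nonneg fun x => ?_
  simp only [Pi.zero_apply, norm_mul, Complex.norm_real, Real.norm_eq_abs]
  by_cases h : x ∈ cap t y
  · rw [Set.indicator_of_mem h]
    nlinarith [sq_nonneg (lam * |hh L t (ip x y)| - ‖g x‖), sq_abs (hh L t (ip x y))]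
  · rw [Set.indicator_of_notMem h]
    have : hh L t (ip x y) = 0 := Set.indicator_of_notMem (by exact h) _
    simp [this]

lemma exists_g {L : ℕ} {t : ℝ} (ht : t ∈ Set.Ioo (0:ℝ) 1)
    (hmax : ∀ s : ℝ, (legendrePoly L).eval s = 0 → s ≤ t) {f : S2 → ℂ} (hf : IsPolyS L f) :
    Continuous f ∧ ∃ g : S2 → ℂ, Continuous g ∧
      (∀ y, ∫ x, (hh L t (ip x y) : ℂ) * g x ∂sig = f y) ∧
      (∫ x, ‖g x‖ ^ 2 ∂sig) * (2 * Real.pi * ∫ s in t..1, (legendrePoly L).eval s ^ 2) ^ 2 ≤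
        ∫ x, ‖f x‖ ^ 2 ∂sig := by
  set c0 := ∫ s in t..1, (legendrePoly L).eval s ^ 2 with hc0
  have c0pos : 0 < c0 := sq_int_pos L t ht.2
  have hpi := Real.pi_pos
  set a : ℕ → ℝ := fun l => ∫ s in t..1, (legendrePoly L).eval s * (legendrePoly l).eval s with ha
  have hle : ∀ l ∈ Finset.range (L + 1), c0 ≤ a l := by
    intro l hl
    have hl' : l ≤ L := Nat.lt_succ_iff.mp (Finset.mem_range.mp hl)
    refine intervalIntegral.integral_mono_on_of_le_Ioo ht.2.le
      (Continuous.intervalIntegrable (by fun_prop) _ _)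
      (Continuous.intervalIntegrable (by fun_prop) _ _) fun s hs => ?_
    obtain ⟨h1, h2⟩ := legendre_compare hl' t ht.1 hmax s hs.1 hs.2.le
    rw [sq]
    exact mul_le_mul_of_nonneg_left h2 h1.le
  obtain ⟨y0⟩ : Nonempty S2 := ⟨⟨EuclideanSpace.single 0 1, by simp⟩⟩
  have hcont : Continuous f := (poly_good hf y0).1
  have hdec : ∀ y, f y = ∑ k ∈ Finset.range (L + 1), Pj k f y := fun y => (good_proj (poly_good hf y)).1
  set α : ℕ → ℝ := fun l => 1 / (2 * Real.pi * a l) with hα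
  refine ⟨hcont, fun x => ∑ l ∈ Finset.range (L + 1), (α l : ℂ) * Pj l f x, ?_, ?_, ?_⟩
  · exact continuous_finsetSum _ fun l _ => continuous_const.mul (Pj_cont l hcont)
  · intro y
    simp_rw [Finset.mul_sum]
    rw [integral_finsetSum]
    · rw [hdec y]
      refine Finset.sum_congr rfl fun l hl => ?_
      simp_rw [mul_left_comm _ (α l : ℂ)]
      rw [integral_const_mul, op_Pj l hcont y (hh_adm L t), hh_mul_int ht]
      have h1 : α l * (2 * Real.pi * a l) = 1 := by
        have := lt_of_lt_of_le c0pos (hle l hl)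
        simp only [hα]
        exact one_div_mul_cancel (by positivity)
      have h2 : (α l : ℂ) * (2 * Real.pi * (a l : ℂ)) = 1 := by exact_mod_cast h1
      rw [← mul_assoc]
      exact (congrArg (· * Pj l f y) h2).trans (one_mul _)
    · intro l _
      exact (hh_adm L t).integrable (continuous_const.mul (Pj_cont l hcont)) y
  · have hfn := normsq_comb (L + 1) (fun _ => 1) hcont
    simp only [Complex.ofReal_one, one_mul, one_pow, ← hdec] at hfn
    rw [normsq_comb (L + 1) α hcont, hfn, Finset.sum_mul]
    refine Finset.sum_le_sum fun l hl => ?_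
    have hal := hle l hl
    have hapos := lt_of_lt_of_le c0pos hal
    have h0 : 0 ≤ ∫ x, ‖Pj l f x‖ ^ 2 ∂sig := integral_nonneg fun x => by positivity
    have h1 : α l * (2 * Real.pi * c0) ≤ 1 := by
      simp only [hα]
      rw [one_div_mul_eq_div, div_le_one (by positivity)]
      gcongr
    have h2 : 0 ≤ α l * (2 * Real.pi * c0) := by
      simp only [hα]; positivity
    have h3 : (α l * (2 * Real.pi * c0)) ^ 2 ≤ 1 := pow_le_one₀ h2 h1
    calc _ = (α l * (2 * Real.pi * c0)) ^ 2 * ∫ x, ‖Pj l f x‖ ^ 2 ∂sig := by ring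
      _ ≤ _ := mul_le_of_le_one_left h0 h3

lemma swap_cap {t : ℝ} {g : S2 → ℂ} (hg : Continuous g) {Ω : Set S2}
    (hΩ : MeasurableSet Ω) :
    Integrable (fun y => ∫ x, (cap t y).indicator (fun x => ‖g x‖ ^ 2) x ∂sig) (sig.restrict Ω) ∧
    Integrable (fun x => ‖g x‖ ^ 2 * (sig (Ω ∩ cap t x)).toReal) sig ∧
    ∫ y in Ω, (∫ x, (cap t y).indicator (fun x => ‖g x‖ ^ 2) x ∂sig) ∂sig =
      ∫ x, ‖g x‖ ^ 2 * (sig (Ω ∩ cap t x)).toReal ∂sig := by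
  have hS : MeasurableSet {p : S2 × S2 | t ≤ ip p.2 p.1} :=
    measurableSet_le measurable_const (ip_cont2.comp continuous_swap).measurable
  have hcg : Continuous fun p : S2 × S2 => ‖g p.2‖ ^ 2 := by fun_prop
  have hInteg : Integrable (fun p : S2 × S2 => (cap t p.1).indicator (fun x => ‖g x‖ ^ 2) p.2)
      ((sig.restrict Ω).prod sig) := by
    have : Integrable ({p : S2 × S2 | t ≤ ip p.2 p.1}.indicator fun p => ‖g p.2‖ ^ 2)
        ((sig.restrict Ω).prod sig) :=
      (hcg.integrable_of_hasCompactSupport (HasCompactSupport.of_compactSpace _)).indicator hS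
    exact this
  have hx : ∀ x, ∫ y in Ω, (cap t y).indicator (fun x => ‖g x‖ ^ 2) x ∂sig =
      ‖g x‖ ^ 2 * (sig (Ω ∩ cap t x)).toReal := by
    intro x
    have : ∀ y, (cap t y).indicator (fun x => ‖g x‖ ^ 2) x =
        (cap t x).indicator (fun _ => ‖g x‖ ^ 2) y := by
      intro y
      have hiff : x ∈ cap t y ↔ y ∈ cap t x := by
        simp only [cap, Set.mem_ofPred_eq, ip_comm]
      by_cases h : x ∈ cap t y
      · rw [Set.indicator_of_mem h, Set.indicator_of_mem (hiff.1 h)]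
      · rw [Set.indicator_of_notMem h, Set.indicator_of_notMem (fun h' => h (hiff.2 h'))]
    simp_rw [this]
    rw [integral_indicator (cap_meas t x), Measure.restrict_restrict (cap_meas t x),
      setIntegral_const, Set.inter_comm, smul_eq_mul, mul_comm]
    rfl
  refine ⟨hInteg.integral_prod_left, ?_, ?_⟩
  · have := hInteg.integral_prod_right
    simpa only [hx] using this
  · rw [integral_integral_swap hInteg]
    simp_rw [hx]

lemma main {L : ℕ} {t : ℝ} (ht : t ∈ Set.Ioo (0:ℝ) 1)
    (hmax : ∀ s : ℝ, (legendrePoly L).eval s = 0 → s ≤ t) {f : S2 → ℂ} (hf : IsPolyS L f)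
    {Ω : Set S2} (hΩ : MeasurableSet Ω) :
    (∫ x in Ω, ‖f x‖ ^ 2 ∂sig) ≤
      ((1 - t) * (∫ s in Set.Icc t 1, (legendrePoly L).eval s ^ 2)⁻¹) *
      (⨆ y : S2, (sig (Ω ∩ cap t y)).toReal / (sig (cap t y)).toReal) *
      ∫ x, ‖f x‖ ^ 2 ∂sig := by
  obtain ⟨hcont, g, hg, hTg, hnorm⟩ := exists_g ht hmax hf
  have hc : ∫ s in Set.Icc t 1, (legendrePoly L).eval s ^ 2 =
      ∫ s in t..1, (legendrePoly L).eval s ^ 2 := by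
    rw [intervalIntegral.integral_of_le ht.2.le, integral_Icc_eq_integral_Ioc]
  rw [hc]
  have c0pos := sq_int_pos L t ht.2
  set c0 := ∫ s in t..1, (legendrePoly L).eval s ^ 2 with hc0
  set ρ := ⨆ y : S2, (sig (Ω ∩ cap t y)).toReal / (sig (cap t y)).toReal with hρ
  have hpi := Real.pi_pos
  have h1t : 0 < 1 - t := sub_pos.2 ht.2
  have hbdd : BddAbove (Set.range fun y : S2 =>
      (sig (Ω ∩ cap t y)).toReal / (sig (cap t y)).toReal) := by
    refine ⟨1, ?_⟩
    rintro _ ⟨y, rfl⟩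
    refine div_le_one_of_le₀ ?_ ENNReal.toReal_nonneg
    exact ENNReal.toReal_mono (measure_ne_top _ _) (measure_mono Set.inter_subset_right)
  have hρle : ∀ y, (sig (Ω ∩ cap t y)).toReal ≤ ρ * (2 * Real.pi * (1 - t)) := by
    intro y
    have := le_ciSup hbdd y
    rw [cap_vol ht, div_le_iff₀ (by positivity)] at this
    exact this
  have hρ0 : 0 ≤ ρ := Real.iSup_nonneg fun y => by positivity
  obtain ⟨s1, s2, s3⟩ := swap_cap (t := t) hg hΩ
  have hfi : Integrable (fun x => ‖f x‖ ^ 2) sig :=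
    (hcont.norm.pow 2).integrable_of_hasCompactSupport (HasCompactSupport.of_compactSpace _)
  have hgi : Integrable (fun x => ‖g x‖ ^ 2) sig :=
    (hg.norm.pow 2).integrable_of_hasCompactSupport (HasCompactSupport.of_compactSpace _)
  have step1 : (∫ x in Ω, ‖f x‖ ^ 2 ∂sig) ≤
      (2 * Real.pi * c0) * ∫ x, ‖g x‖ ^ 2 * (sig (Ω ∩ cap t x)).toReal ∂sig := by
    rw [← s3, ← integral_const_mul]
    refine integral_mono hfi.restrict (s1.const_mul _) fun y => ?_
    have := pointwise ht L hg y
    rw [hTg] at this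
    exact this
  have step2 : ∫ x, ‖g x‖ ^ 2 * (sig (Ω ∩ cap t x)).toReal ∂sig ≤
      (∫ x, ‖g x‖ ^ 2 ∂sig) * (ρ * (2 * Real.pi * (1 - t))) := by
    rw [← integral_mul_const]
    refine integral_mono s2 (hgi.mul_const _) fun x => ?_
    exact mul_le_mul_of_nonneg_left (hρle x) (by positivity)
  calc _ ≤ _ := step1
    _ ≤ (2 * Real.pi * c0) * ((∫ x, ‖g x‖ ^ 2 ∂sig) * (ρ * (2 * Real.pi * (1 - t)))) := by gcongr
    _ = ((1 - t) * c0⁻¹) * ρ * ((∫ x, ‖g x‖ ^ 2 ∂sig) * (2 * Real.pi * c0) ^ 2) := by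
      field_simp
    _ ≤ _ := by gcongr

end LSSH

/-- **large sieve for finite spherical harmonics expansions, `p = 2`.**
Let `L ≥ 1`, let `S_L` be the space of restrictions to the unit sphere `S² ⊂ ℝ³` of
complex polynomials of degree at most `L`, let `t = t_{L,L} ∈ (0,1)` be the largest zero
of the Legendre polynomial `P_L`, and for `y ∈ S²` let
`C_t(y) = {x ∈ S² : ⟨x, y⟩ ≥ t}` be the corresponding spherical cap.  With
`ρ_{S²}(Ω, L) = sup_y σ(Ω ∩ C_t(y)) / σ(C_t(y))` and
`B_L = (1 - t) (∫_t^1 P_L(s)² ds)⁻¹`, every measurable `Ω ⊆ S²` and every nonzero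
`f ∈ S_L` satisfy `∫_Ω |f|² dσ ≤ B_L · ρ_{S²}(Ω, L) · ∫_{S²} |f|² dσ`. -/
theorem large_sieve_spherical_harmonics
    (L : ℕ) (hL : 1 ≤ L)
    (t : ℝ) (ht : t ∈ Set.Ioo (0 : ℝ) 1)
    (hroot : (legendrePoly L).eval t = 0)
    (hmax : ∀ s : ℝ, (legendrePoly L).eval s = 0 → s ≤ t)
    (f : Metric.sphere (0 : EuclideanSpace ℝ (Fin 3)) 1 → ℂ)
    (hf : ∃ p : MvPolynomial (Fin 3) ℂ, p.totalDegree ≤ L ∧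
      ∀ x : Metric.sphere (0 : EuclideanSpace ℝ (Fin 3)) 1,
        f x = MvPolynomial.eval (fun i => ((x : EuclideanSpace ℝ (Fin 3)) i : ℂ)) p)
    (hf0 : f ≠ 0)
    (Ω : Set (Metric.sphere (0 : EuclideanSpace ℝ (Fin 3)) 1)) (hΩ : MeasurableSet Ω) :
    (∫ x in Ω, ‖f x‖ ^ 2 ∂(volume : Measure (EuclideanSpace ℝ (Fin 3))).toSphere) ≤
      ((1 - t) * (∫ s in Set.Icc t 1, (legendrePoly L).eval s ^ 2)⁻¹) *
      (⨆ y : Metric.sphere (0 : EuclideanSpace ℝ (Fin 3)) 1,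
        ((volume : Measure (EuclideanSpace ℝ (Fin 3))).toSphere
            (Ω ∩ {x : Metric.sphere (0 : EuclideanSpace ℝ (Fin 3)) 1 |
              t ≤ inner (𝕜 := ℝ) (x : EuclideanSpace ℝ (Fin 3)) (y : EuclideanSpace ℝ (Fin 3))})).toReal /
          ((volume : Measure (EuclideanSpace ℝ (Fin 3))).toSphere
            {x : Metric.sphere (0 : EuclideanSpace ℝ (Fin 3)) 1 |
              t ≤ inner (𝕜 := ℝ) (x : EuclideanSpace ℝ (Fin 3)) (y : EuclideanSpace ℝ (Fin 3))}).toReal) *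
      ∫ x, ‖f x‖ ^ 2 ∂(volume : Measure (EuclideanSpace ℝ (Fin 3))).toSphere := by
  exact LSSH.main ht hmax hf hΩ
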